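/- Fix p > 1, t > 0, ρ > t. The operator E_p on ℓ²(ℕ₀) with entries E_p(j,k) = p^(−(ρ+t)j/2)·p^(t·max(j,k))·p^(−(ρ+t)k/2) has exactly one positive eigenvalue (counted with multiplicity). -/

import Mathlib

open Real

/-- The entries of the matrix `E_p`. -/
noncomputable def Ep (p t ρ : ℝ) (j k : ℕ) : ℝ :=
  p ^ (-(ρ + t) * j / 2) * p ^ (t * (max j k : ℕ)) * p ^ (-(ρ + t) * k / 2)

/-!
With `q = p ^ (-t)` and `r = p ^ ((t - ρ) / 2)`, `E_p` has entries `r ^ j * q ^ min j k * r ^ k`.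
Since `q ^ i` decreases from `q ^ 0 = 1`, the kernel `1 - q ^ min j k` is positive semidefinite, so
`⟪E_p x, x⟫ ≤ (∑ k, r ^ k * x k) ^ 2`: the operator is `ψψᵀ - B` with `B` positive.

For such an operator, `s > 0` is an eigenvalue iff `B x + s x = ⟪ψ, x⟫ ψ` has a nonzero solution. As
`B + s` is invertible, the solutions are multiples of `(B + s)⁻¹ ψ`, so the eigenspace is a line
and `s` solves the secular equation `⟪ψ, (B + s)⁻¹ ψ⟫ = 1`. Its left-hand side is continuous and
strictly decreasing in `s`, at most `1` for large `s`, and at least `1` somewhere as soon as the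
quadratic form of `ψψᵀ - B` takes a positive value.
-/

open scoped InnerProductSpace
open InnerProductSpace

/-- The endomorphism `T` has exactly one positive eigenvalue, counted with (geometric)
multiplicity. -/
def HasExactlyOnePosEigenvalue {E : Type*} [AddCommGroup E] [Module ℝ E]
    (T : Module.End ℝ E) : Prop :=
  (∃! μ : ℝ, 0 < μ ∧ T.HasEigenvalue μ) ∧
    ∀ μ : ℝ, 0 < μ → T.HasEigenvalue μ → Module.finrank ℝ (T.eigenspace μ) = 1

section SecularEquation

variable {H : Type*} [NormedAddCommGroup H] [InnerProductSpace ℝ H]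

/-- The vector `(B + s)⁻¹ ψ`, which spans the `s`-eigenspace of `ψψᵀ - B` whenever `s` is an
eigenvalue; it is `0` if `B + s` is not invertible. -/
noncomputable def secularVector (B : H →L[ℝ] H) (ψ : H) (s : ℝ) : H :=
  Ring.inverse (B + s • 1) ψ

/-- The function `s ↦ ⟪ψ, (B + s)⁻¹ ψ⟫` of the secular equation `secularFun B ψ s = 1`, which
characterizes the positive eigenvalues of `ψψᵀ - B`. -/
noncomputable def secularFun (B : H →L[ℝ] H) (ψ : H) (s : ℝ) : ℝ :=
  ⟪ψ, secularVector B ψ s⟫_ℝ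

variable {B : H →L[ℝ] H} {ψ : H} {s : ℝ}

theorem mem_eigenspace_rankOne_sub_iff {x : H} :
    x ∈ Module.End.eigenspace (rankOne ℝ ψ ψ - B : H →L[ℝ] H).toLinearMap s ↔
      B x + s • x = ⟪ψ, x⟫_ℝ • ψ := by
  rw [Module.End.mem_eigenspace_iff, ContinuousLinearMap.coe_coe, sub_apply, rankOne_apply,
    sub_eq_iff_eq_add', eq_comm]

variable [CompleteSpace H]

theorem isUnit_add_smul_one (hB : B.IsPositive) (hs : 0 < s) :
    IsUnit (B + s • (1 : H →L[ℝ] H)) := by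
  refine ContinuousLinearMap.isUnit_of_forall_le_norm_inner_map _ (c := ⟨s, hs.le⟩) hs fun x ↦ ?_
  calc ‖x‖ ^ 2 * s ≤ ⟪B x, x⟫_ℝ + s * ‖x‖ ^ 2 := by linarith [hB.inner_nonneg_left x]
    _ = ⟪(B + s • (1 : H →L[ℝ] H)) x, x⟫_ℝ := by
      simp [inner_add_left, real_inner_smul_left]
    _ ≤ ‖⟪(B + s • (1 : H →L[ℝ] H)) x, x⟫_ℝ‖ := Real.le_norm_self _

theorem apply_secularVector_add_smul (hB : B.IsPositive) (hs : 0 < s) :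
    B (secularVector B ψ s) + s • secularVector B ψ s = ψ := by
  simpa [secularVector] using
    congr($(Ring.mul_inverse_cancel _ (isUnit_add_smul_one hB hs)) ψ)

theorem eq_smul_secularVector (hB : B.IsPositive) (hs : 0 < s) {x : H} {c : ℝ}
    (hx : B x + s • x = c • ψ) : x = c • secularVector B ψ s := by
  have hinv := congr($(Ring.inverse_mul_cancel _ (isUnit_add_smul_one hB hs)) x)
  simpa [secularVector, hx] using hinv.symm

theorem inner_apply_secularVector_add (hB : B.IsPositive) (hs : 0 < s) (x : H) :
    ⟪B x, secularVector B ψ s⟫_ℝ + s * ⟪x, secularVector B ψ s⟫_ℝ = ⟪ψ, x⟫_ℝ := by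
  rw [hB.inner_left_eq_inner_right, ← real_inner_smul_right, ← inner_add_right,
    apply_secularVector_add_smul hB hs, real_inner_comm]

theorem secularFun_eq_quadratic_form (hB : B.IsPositive) (hs : 0 < s) :
    secularFun B ψ s =
      ⟪B (secularVector B ψ s), secularVector B ψ s⟫_ℝ + s * ‖secularVector B ψ s‖ ^ 2 := by
  rw [secularFun, ← inner_apply_secularVector_add hB hs, real_inner_self_eq_norm_sq]

/-- Completing the square: the difference is the form of `B + s` at `secularVector B ψ s - x`. -/
theorem two_mul_inner_sub_le_secularFun (hB : B.IsPositive) (hs : 0 < s) (x : H) :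
    2 * ⟪ψ, x⟫_ℝ - (⟪B x, x⟫_ℝ + s * ‖x‖ ^ 2) ≤ secularFun B ψ s := by
  have hdiag := secularFun_eq_quadratic_form (ψ := ψ) hB hs
  have hcross := inner_apply_secularVector_add (ψ := ψ) hB hs x
  set u := secularVector B ψ s
  have hsq : 0 ≤ ⟪B (u - x), u - x⟫_ℝ + s * ‖u - x‖ ^ 2 :=
    add_nonneg (hB.inner_nonneg_left _) (by positivity)
  have hsymm : ⟪B u, x⟫_ℝ = ⟪B x, u⟫_ℝ := by rw [hB.inner_left_eq_inner_right, real_inner_comm]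
  simp only [map_sub, inner_sub_left, inner_sub_right, norm_sub_sq_real, hsymm,
    real_inner_comm x u] at hsq
  linarith

theorem secularVector_ne_zero (hB : B.IsPositive) (hψ : ψ ≠ 0) (hs : 0 < s) :
    secularVector B ψ s ≠ 0 := by
  intro hu
  exact hψ (by simpa [hu] using (apply_secularVector_add_smul (ψ := ψ) hB hs).symm)

theorem strictAntiOn_secularFun (hB : B.IsPositive) (hψ : ψ ≠ 0) :
    StrictAntiOn (secularFun B ψ) (Set.Ioi 0) := by
  intro s hs t ht hst
  have hnorm : 0 < ‖secularVector B ψ t‖ := norm_pos_iff.2 (secularVector_ne_zero hB hψ ht)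
  have hgap : 0 < (t - s) * ‖secularVector B ψ t‖ ^ 2 := mul_pos (sub_pos.2 hst) (by positivity)
  have hvar := two_mul_inner_sub_le_secularFun (ψ := ψ) hB hs (secularVector B ψ t)
  rw [← secularFun] at hvar
  linarith [secularFun_eq_quadratic_form (ψ := ψ) hB ht]

theorem continuousOn_secularFun (hB : B.IsPositive) :
    ContinuousOn (secularFun B ψ) (Set.Ioi 0) := by
  intro s hs
  obtain ⟨U, hU⟩ := isUnit_add_smul_one hB hs
  have hinv : ContinuousAt Ring.inverse (B + s • (1 : H →L[ℝ] H)) :=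
    hU ▸ NormedRing.inverse_continuousAt U
  have hshift : ContinuousAt (fun r : ℝ ↦ B + r • (1 : H →L[ℝ] H)) s := by fun_prop
  have hres : ContinuousAt (secularVector B ψ) s :=
    (hinv.comp_of_eq hshift rfl).clm_apply continuousAt_const
  exact (continuousAt_const.inner hres).continuousWithinAt

theorem mul_secularFun_le (hB : B.IsPositive) (hs : 0 < s) :
    s * secularFun B ψ s ≤ ‖ψ‖ ^ 2 := by
  have hcoercive : s * ‖secularVector B ψ s‖ ^ 2 ≤ secularFun B ψ s := by
    linarith [secularFun_eq_quadratic_form (ψ := ψ) hB hs,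
      hB.inner_nonneg_left (secularVector B ψ s)]
  have hcs : secularFun B ψ s ≤ ‖ψ‖ * ‖secularVector B ψ s‖ := real_inner_le_norm _ _
  nlinarith [sq_nonneg (‖ψ‖ - s * ‖secularVector B ψ s‖)]

theorem exists_one_le_secularFun (hB : B.IsPositive) {e : H} (he : ⟪B e, e⟫_ℝ < ⟪ψ, e⟫_ℝ ^ 2) :
    ∃ s, 0 < s ∧ 1 ≤ secularFun B ψ s := by
  have he0 : e ≠ 0 := by rintro rfl; simp at he
  have hψe : ⟪ψ, e⟫_ℝ ≠ 0 := by
    intro h0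
    simp only [h0] at he
    linarith [hB.inner_nonneg_left e]
  -- For this `s`, the form of `B + s` at the multiple of `e` with `⟪ψ, x⟫ = 1` equals `1`.
  set s := (⟪ψ, e⟫_ℝ ^ 2 - ⟪B e, e⟫_ℝ) / ‖e‖ ^ 2 with hs_def
  have hs : 0 < s := div_pos (sub_pos.2 he) (by positivity)
  have hform : ⟪B e, e⟫_ℝ + s * ‖e‖ ^ 2 = ⟪ψ, e⟫_ℝ ^ 2 := by
    rw [hs_def]; field_simp; ring
  refine ⟨s, hs, (two_mul_inner_sub_le_secularFun hB hs ((⟪ψ, e⟫_ℝ)⁻¹ • e)).trans' (le_of_eq ?_)⟩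
  simp only [map_smul, real_inner_smul_left, real_inner_smul_right, norm_smul, mul_pow, norm_inv,
    inv_pow, Real.norm_eq_abs, sq_abs]
  field_simp
  linarith

theorem exists_secularFun_eq_one (hB : B.IsPositive) {e : H} (he : ⟪B e, e⟫_ℝ < ⟪ψ, e⟫_ℝ ^ 2) :
    ∃ s, 0 < s ∧ secularFun B ψ s = 1 := by
  obtain ⟨s, hs, hs1⟩ := exists_one_le_secularFun hB he
  have hψ : 0 < ‖ψ‖ ^ 2 :=
    (mul_pos hs (one_pos.trans_le hs1)).trans_le (mul_secularFun_le hB hs)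
  have hlarge : secularFun B ψ (‖ψ‖ ^ 2) ≤ 1 :=
    le_of_mul_le_mul_left (by simpa using mul_secularFun_le hB hψ) hψ
  exact isPreconnected_Ioi.intermediate_value hψ hs (continuousOn_secularFun hB) ⟨hlarge, hs1⟩

theorem eigenspace_rankOne_sub_le (hB : B.IsPositive) (hs : 0 < s) :
    Module.End.eigenspace (rankOne ℝ ψ ψ - B : H →L[ℝ] H).toLinearMap s ≤
      ℝ ∙ secularVector B ψ s := fun _ hx ↦
  Submodule.mem_span_singleton.2
    ⟨_, (eq_smul_secularVector hB hs (mem_eigenspace_rankOne_sub_iff.1 hx)).symm⟩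

theorem hasEigenvalue_rankOne_sub_iff (hB : B.IsPositive) (hψ : ψ ≠ 0) (hs : 0 < s) :
    Module.End.HasEigenvalue (rankOne ℝ ψ ψ - B : H →L[ℝ] H).toLinearMap s ↔
      secularFun B ψ s = 1 := by
  constructor
  · intro h
    obtain ⟨x, hx, hx0⟩ := h.exists_hasEigenvector
    have hxu := eq_smul_secularVector hB hs (mem_eigenspace_rankOne_sub_iff.1 hx)
    have hψx : ⟪ψ, x⟫_ℝ ≠ 0 := fun h0 ↦ hx0 (by simpa [h0] using hxu)
    have hinner : ⟪ψ, x⟫_ℝ = ⟪ψ, x⟫_ℝ * secularFun B ψ s := by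
      conv_lhs => rw [hxu, real_inner_smul_right, ← secularFun]
    exact (mul_eq_left₀ hψx).1 hinner.symm
  · intro h
    refine Module.End.hasEigenvalue_of_hasEigenvector (x := secularVector B ψ s)
      ⟨mem_eigenspace_rankOne_sub_iff.2 ?_, secularVector_ne_zero hB hψ hs⟩
    rw [apply_secularVector_add_smul hB hs, ← secularFun, h, one_smul]

theorem finrank_eigenspace_rankOne_sub (hB : B.IsPositive) (hψ : ψ ≠ 0) (hs : 0 < s)
    (h : Module.End.HasEigenvalue (rankOne ℝ ψ ψ - B : H →L[ℝ] H).toLinearMap s) :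
    Module.finrank ℝ (Module.End.eigenspace (rankOne ℝ ψ ψ - B : H →L[ℝ] H).toLinearMap s) = 1 := by
  have hu := secularVector_ne_zero hB hψ hs
  have hspan : Module.End.eigenspace (rankOne ℝ ψ ψ - B : H →L[ℝ] H).toLinearMap s =
      ℝ ∙ secularVector B ψ s :=
    ((nonzero_span_atom _ hu).le_iff_eq h).1 (eigenspace_rankOne_sub_le hB hs)
  rw [hspan, finrank_span_singleton hu]

theorem hasExactlyOnePosEigenvalue_rankOne_sub (hB : B.IsPositive) {e : H}
    (he : ⟪B e, e⟫_ℝ < ⟪ψ, e⟫_ℝ ^ 2) :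
    HasExactlyOnePosEigenvalue (rankOne ℝ ψ ψ - B : H →L[ℝ] H).toLinearMap := by
  have hψ : ψ ≠ 0 := by
    rintro rfl
    simpa using he.trans_le' (hB.inner_nonneg_left e)
  obtain ⟨s, hs, hs1⟩ := exists_secularFun_eq_one hB he
  refine ⟨⟨s, ⟨hs, (hasEigenvalue_rankOne_sub_iff hB hψ hs).2 hs1⟩, ?_⟩,
    fun μ hμ h ↦ finrank_eigenspace_rankOne_sub hB hψ hμ h⟩
  rintro μ ⟨hμ, h⟩
  exact (strictAntiOn_secularFun hB hψ).injOn hμ hs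
    (((hasEigenvalue_rankOne_sub_iff hB hψ hμ).1 h).trans hs1.symm)

/-- The reverse Cauchy–Schwarz inequality says that `A` is at most the rank-one operator `ψψᵀ` with
`ψ = A e / √⟪A e, e⟫`. -/
theorem hasExactlyOnePosEigenvalue_of_reverse_cauchySchwarz {A : H →L[ℝ] H}
    (hA : A.toLinearMap.IsSymmetric) {e : H} (he : 0 < ⟪A e, e⟫_ℝ)
    (hcs : ∀ x, ⟪A e, e⟫_ℝ * ⟪A x, x⟫_ℝ ≤ ⟪A e, x⟫_ℝ ^ 2) :
    HasExactlyOnePosEigenvalue A.toLinearMap := by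
  set a := ⟪A e, e⟫_ℝ
  set ψ := (√a)⁻¹ • A e with hψ
  have hψx (x : H) : ⟪ψ, x⟫_ℝ ^ 2 = a⁻¹ * ⟪A e, x⟫_ℝ ^ 2 := by
    rw [hψ, real_inner_smul_left, mul_pow, inv_pow, sq_sqrt he.le]
  have hB : (rankOne ℝ ψ ψ - A).IsPositive := by
    refine (ContinuousLinearMap.isPositive_iff _).2
      ⟨(isSymmetric_rankOne_self ψ).sub hA, fun x ↦ ?_⟩
    have hdiv : ⟪A x, x⟫_ℝ ≤ a⁻¹ * ⟪A e, x⟫_ℝ ^ 2 := (le_inv_mul_iff₀ he).2 (hcs x)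
    rw [sub_apply, inner_sub_left, rankOne_apply, real_inner_smul_left, ← sq, hψx]
    exact sub_nonneg.2 hdiv
  have he_gap : ⟪(rankOne ℝ ψ ψ - A) e, e⟫_ℝ < ⟪ψ, e⟫_ℝ ^ 2 := by
    simpa [inner_sub_left, real_inner_smul_left, ← sq] using he
  simpa only [sub_sub_cancel] using hasExactlyOnePosEigenvalue_rankOne_sub hB he_gap

end SecularEquation

section MinKernel

variable {ι : Type*} [LinearOrder ι]

theorem sum_min_kernel_nonneg (s : Finset ι) (y : ι → ℝ) {g : ι → ℝ} (hg : MonotoneOn g s)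
    (hg0 : ∀ i ∈ s, 0 ≤ g i) : 0 ≤ ∑ j ∈ s, ∑ k ∈ s, g (min j k) * (y j * y k) := by
  induction s using Finset.induction_on_min generalizing g with
  | empty => simp
  | insert a s ha ih =>
    have has : a ∉ s := fun h ↦ (ha a h).false
    have hga : ∀ i ∈ s, 0 ≤ g i - g a := fun i hi ↦
      sub_nonneg.2 (hg (by simp) (by simp [hi]) (ha i hi).le)
    -- Splitting off the constant kernel `g a` leaves a kernel supported on `s × s`.
    have hsplit : ∑ j ∈ insert a s, ∑ k ∈ insert a s, g (min j k) * (y j * y k) =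
        g a * (∑ k ∈ insert a s, y k) ^ 2 +
          ∑ j ∈ s, ∑ k ∈ s, (g (min j k) - g a) * (y j * y k) := by
      have hleft : ∀ k ∈ s, g (min a k) = g a := fun k hk ↦ by rw [min_eq_left (ha k hk).le]
      have hright : ∀ j ∈ s, g (min j a) = g a := fun j hj ↦ by rw [min_eq_right (ha j hj).le]
      simp +contextual only [Finset.sum_insert has, hleft, hright, min_self, sub_mul,
        Finset.sum_add_distrib, Finset.sum_sub_distrib, ← Finset.mul_sum, ← Finset.sum_mul]
      ring
    rw [hsplit]
    have hrest := ih (g := fun i ↦ g i - g a)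
      (fun i hi j hj hij ↦ sub_le_sub_right
        (hg (Finset.mem_insert_of_mem hi) (Finset.mem_insert_of_mem hj) hij) _) hga
    have hga0 := hg0 a (s.mem_insert_self a)
    positivity

theorem sum_antitone_min_kernel_le [OrderBot ι] {h : ι → ℝ} (hh : Antitone h) (s : Finset ι)
    (y : ι → ℝ) :
    ∑ j ∈ s, ∑ k ∈ s, h (min j k) * (y j * y k) ≤ h ⊥ * (∑ k ∈ s, y k) ^ 2 := by
  have hnonneg := sum_min_kernel_nonneg s y (g := fun i ↦ h ⊥ - h i)
    (fun _ _ _ _ hij ↦ sub_le_sub_left (hh hij) _) fun _ _ ↦ sub_nonneg.2 (hh bot_le)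
  simp only [sub_mul, Finset.sum_sub_distrib, ← Finset.mul_sum, ← Finset.sum_mul] at hnonneg
  linarith

end MinKernel

section HilbertBasisEntries

variable {ι H : Type*} [NormedAddCommGroup H] [InnerProductSpace ℝ H]

theorem isSymmetric_of_inner_hilbertBasis [CompleteSpace H] (b : HilbertBasis ι ℝ H)
    {A : H →L[ℝ] H} (hA : ∀ j k, ⟪b j, A (b k)⟫_ℝ = ⟪b k, A (b j)⟫_ℝ) :
    A.toLinearMap.IsSymmetric := by
  rw [← ContinuousLinearMap.isSelfAdjoint_iff_isSymmetric]
  have hdense := Submodule.dense_iff_topologicalClosure_eq_top.2 b.dense_span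
  refine ContinuousLinearMap.ext_on hdense ?_
  rintro _ ⟨k, rfl⟩
  refine b.repr.injective (lp.ext (funext fun j ↦ ?_))
  rw [b.repr_apply_apply, b.repr_apply_apply, ContinuousLinearMap.star_eq_adjoint,
    ContinuousLinearMap.adjoint_inner_right, real_inner_comm, hA]

theorem inner_apply_sum_smul (A : H →L[ℝ] H) (b : ι → H) (s : Finset ι) (c : ι → ℝ) :
    ⟪A (∑ i ∈ s, c i • b i), ∑ i ∈ s, c i • b i⟫_ℝ =
      ∑ j ∈ s, ∑ k ∈ s, ⟪b j, A (b k)⟫_ℝ * (c j * c k) := by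
  simp only [map_sum, map_smul, sum_inner, inner_sum, real_inner_smul_left, real_inner_smul_right]
  refine Finset.sum_congr rfl fun j _ ↦ Finset.sum_congr rfl fun k _ ↦ ?_
  rw [real_inner_comm (b j)]
  ring

theorem reverse_cauchySchwarz_of_min_kernel [LinearOrder ι] [OrderBot ι] (b : HilbertBasis ι ℝ H)
    {A : H →L[ℝ] H} {h w : ι → ℝ} (hh : Antitone h) (hbot : 0 ≤ h ⊥)
    (hA : ∀ j k, ⟪b j, A (b k)⟫_ℝ = w j * h (min j k) * w k) (x : H) :
    ⟪A (b ⊥), b ⊥⟫_ℝ * ⟪A x, x⟫_ℝ ≤ ⟪A (b ⊥), x⟫_ℝ ^ 2 := by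
  have hclosed : IsClosed {x | ⟪A (b ⊥), b ⊥⟫_ℝ * ⟪A x, x⟫_ℝ ≤ ⟪A (b ⊥), x⟫_ℝ ^ 2} :=
    isClosed_le (by fun_prop) (by fun_prop)
  refine hclosed.mem_of_tendsto (b.hasSum_repr x) (.of_forall fun s ↦ ?_)
  set c : ι → ℝ := ⇑(b.repr x)
  have hrow : ⟪A (b ⊥), ∑ k ∈ s, c k • b k⟫_ℝ = w ⊥ * h ⊥ * ∑ k ∈ s, w k * c k := by
    simp only [inner_sum, real_inner_smul_right, real_inner_comm (b _) (A (b ⊥)), hA,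
      min_bot_right, Finset.mul_sum]
    exact Finset.sum_congr rfl fun k _ ↦ by ring
  have hform : ⟪A (∑ k ∈ s, c k • b k), ∑ k ∈ s, c k • b k⟫_ℝ ≤
      h ⊥ * (∑ k ∈ s, w k * c k) ^ 2 := by
    convert sum_antitone_min_kernel_le hh s (fun k ↦ w k * c k) using 1
    rw [inner_apply_sum_smul]
    refine Finset.sum_congr rfl fun j _ ↦ Finset.sum_congr rfl fun k _ ↦ ?_
    rw [hA]
    ring
  have hdiag : ⟪A (b ⊥), b ⊥⟫_ℝ = h ⊥ * w ⊥ ^ 2 := by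
    rw [real_inner_comm, hA, min_self]
    ring
  calc ⟪A (b ⊥), b ⊥⟫_ℝ * ⟪A (∑ k ∈ s, c k • b k), ∑ k ∈ s, c k • b k⟫_ℝ
      ≤ h ⊥ * w ⊥ ^ 2 * (h ⊥ * (∑ k ∈ s, w k * c k) ^ 2) := by rw [hdiag]; gcongr
    _ = ⟪A (b ⊥), ∑ k ∈ s, c k • b k⟫_ℝ ^ 2 := by rw [hrow]; ring

theorem Ep_one_positive_eigenvalue_general [CompleteSpace H] [LinearOrder ι] [OrderBot ι]
    (b : HilbertBasis ι ℝ H) {A : H →L[ℝ] H} {h w : ι → ℝ} (hh : Antitone h) (hbot : 0 < h ⊥)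
    (hw : w ⊥ ≠ 0) (hA : ∀ j k, ⟪b j, A (b k)⟫_ℝ = w j * h (min j k) * w k) :
    HasExactlyOnePosEigenvalue A.toLinearMap := by
  have hsymm : A.toLinearMap.IsSymmetric := isSymmetric_of_inner_hilbertBasis b fun j k ↦ by
    rw [hA, hA, min_comm]
    ring
  have hpos : 0 < ⟪A (b ⊥), b ⊥⟫_ℝ := by
    rw [real_inner_comm, hA, min_self]
    nlinarith [mul_pos hbot (sq_pos_of_ne_zero hw)]
  exact hasExactlyOnePosEigenvalue_of_reverse_cauchySchwarz hsymm hpos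
    (reverse_cauchySchwarz_of_min_kernel b hh hbot.le hA)

end HilbertBasisEntries

theorem Ep_eq_min_kernel {p : ℝ} (hp : 0 < p) (t ρ : ℝ) (j k : ℕ) :
    Ep p t ρ j k =
      p ^ ((t - ρ) / 2 * j) * p ^ (-t * (min j k : ℕ)) * p ^ ((t - ρ) / 2 * k) := by
  have hmax : ((max j k : ℕ) : ℝ) = j + k - (min j k : ℕ) := by
    rw [eq_sub_iff_add_eq]
    exact_mod_cast max_add_min j k
  simp only [Ep, hmax, ← Real.rpow_add hp]
  ring_nf

theorem antitone_rpow_neg_mul_natCast {p t : ℝ} (hp : 1 ≤ p) (ht : 0 ≤ t) :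
    Antitone fun i : ℕ ↦ p ^ (-t * i) := fun _ _ hij ↦
  Real.rpow_le_rpow_of_exponent_le hp
    (mul_le_mul_of_nonpos_left (Nat.cast_le.2 hij) (neg_nonpos.2 ht))

theorem inner_default_hilbertBasis_apply {ι : Type*} {a : ι → ι → ℝ}
    {A : lp (fun _ : ι ↦ ℝ) 2 →L[ℝ] lp (fun _ : ι ↦ ℝ) 2}
    (hA : ∀ (x : lp (fun _ : ι ↦ ℝ) 2) (j : ι), (A x : ι → ℝ) j = ∑' k, a j k * x k) (j k : ι) :
    ⟪(default : HilbertBasis ι ℝ (lp (fun _ : ι ↦ ℝ) 2)) j,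
      A ((default : HilbertBasis ι ℝ (lp (fun _ : ι ↦ ℝ) 2)) k)⟫_ℝ = a j k := by
  classical
  have hb (i : ι) : (default : HilbertBasis ι ℝ (lp (fun _ : ι ↦ ℝ) 2)) i = lp.single 2 i 1 :=
    (HilbertBasis.repr_symm_single _ i).symm
  rw [hb, hb, lp.inner_single_left, hA, tsum_eq_single k fun i hi ↦ by simp [lp.single_apply, hi]]
  simp

/-- `E_p`, as an operator on `ℓ²(ℕ₀)`, has exactly one positive eigenvalue, counted with
multiplicity: there is a unique `μ > 0` which is an eigenvalue, and its eigenspace is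
one-dimensional. -/
theorem Ep_one_positive_eigenvalue (p t ρ : ℝ) (hp : 1 < p) (ht : 0 < t) (hρ : t < ρ)
    (A : lp (fun _ : ℕ => ℝ) 2 →L[ℝ] lp (fun _ : ℕ => ℝ) 2)
    (hA : ∀ (x : lp (fun _ : ℕ => ℝ) 2) (j : ℕ), (A x : ℕ → ℝ) j = ∑' k : ℕ, Ep p t ρ j k * (x : ℕ → ℝ) k) :
    (∃! μ : ℝ, 0 < μ ∧ Module.End.HasEigenvalue (A : lp (fun _ : ℕ => ℝ) 2 →ₗ[ℝ] lp (fun _ : ℕ => ℝ) 2) μ)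
    ∧ ∀ μ : ℝ, 0 < μ →
        Module.End.HasEigenvalue (A : lp (fun _ : ℕ => ℝ) 2 →ₗ[ℝ] lp (fun _ : ℕ => ℝ) 2) μ →
        Module.finrank ℝ
          (Module.End.eigenspace (A : lp (fun _ : ℕ => ℝ) 2 →ₗ[ℝ] lp (fun _ : ℕ => ℝ) 2) μ) = 1 := by
  exact Ep_one_positive_eigenvalue_general default
    (antitone_rpow_neg_mul_natCast hp.le ht.le) (by simp) (by simp) fun j k ↦
      (inner_default_hilbertBasis_apply hA j k).trans
        (Ep_eq_min_kernel (one_pos.trans hp) t ρ j k)
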